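/- Let N be a positive even integer and h ∈ (1/N)ℤ. Then for all τ ∈ H, ϑ̃_{N,h}(τ + 1) = e(−h²/2) · ϑ̃_{N,h}(τ). -/

import Mathlib

open Complex MeasureTheory
open scoped Classical

noncomputable section

/-- `e(a) = exp(2πia)`. -/
def e (a : ℂ) : ℂ := Complex.exp (2 * (Real.pi : ℂ) * Complex.I * a)

/-- The Fourier transform `F(g)(x) = ∫ g(w) e(wx) dw`. -/
def fourierT (g : ℝ → ℂ) (x : ℝ) : ℂ := ∫ w : ℝ, g w * e ((w * x : ℝ))

/-- The operator `E_σ(f)(x) = e(x²σ/2) ∫_0^x e(-w²σ/2) f(w) dw`. -/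
def Eop (σ : ℂ) (f : ℝ → ℂ) (x : ℝ) : ℂ :=
  e ((x : ℂ)^2 * σ / 2) * ∫ w in (0:ℝ)..x, e (-(w : ℂ)^2 * σ / 2) * f w

/-- `ω_τ(x) = e(-x²τ/2) ∑_{m ∈ ℤ+1/2, m ≥ |x|} e(m²τ/2 + m/2)`. -/
def omega (τ : ℂ) (x : ℝ) : ℂ :=
  e (-(x : ℂ)^2 * τ / 2) *
    ∑' m : ℤ, if |x| ≤ (m : ℝ) + 1/2 then
      e (((m : ℂ) + 1/2)^2 / 2 * τ + ((m : ℂ) + 1/2) / 2) else 0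

/-- `η³(τ) = -i ∑_{m ∈ ℤ+1/2} m e(m²τ/2 + m/2)`. -/
def eta3 (τ : ℂ) : ℂ :=
  -Complex.I * ∑' m : ℤ, ((m : ℂ) + 1/2) * e (((m : ℂ) + 1/2)^2 / 2 * τ + ((m : ℂ) + 1/2) / 2)

/-- The complementary error function. -/
def erfc (x : ℝ) : ℝ := (2 / Real.sqrt Real.pi) * ∫ t in Set.Ioi x, Real.exp (-t^2)

/-- `g⁺_τ`. -/
def gplus (τ : ℂ) (x : ℝ) : ℂ :=
  e (-(x : ℂ)^2 * τ / 2) * ((Real.sign x : ℂ) / (Complex.I * eta3 τ)) *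
    ∑' m : ℤ, if |x| < (m : ℝ) + 1/2 then
      (((m : ℝ) + 1/2 - |x| : ℝ) : ℂ) * e (((m : ℂ) + 1/2)^2 / 2 * τ + ((m : ℂ) + 1/2) / 2)
    else 0

/-- `g*_τ`. -/
def gstar (τ : ℂ) (x : ℝ) : ℂ :=
  e (-(x : ℂ)^2 * τ / 2) * ((Real.sign x : ℂ) / 2) *
    (erfc (Real.sqrt (2 * Real.pi * τ.im) * |x|) : ℂ)

/-- `g_τ = g⁺_τ - g*_τ`. -/
def gfun (τ : ℂ) (x : ℝ) : ℂ := gplus τ x - gstar τ x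

/-- The operator `ξ_k f = 2i v^k conj(∂f/∂τ̄)`, with `∂/∂τ̄ = (1/2)(∂/∂u + i ∂/∂v)`. -/
def xi (k : ℝ) (f : ℂ → ℂ) (τ : ℂ) : ℂ :=
  2 * Complex.I * ((τ.im ^ k : ℝ) : ℂ) *
    (starRingEnd ℂ) ((1/2 : ℂ) * (fderiv ℝ f τ 1 + Complex.I * fderiv ℝ f τ Complex.I))

/-- Sum of divisors function `σ₁`. -/
def sigma1 (n : ℕ) : ℕ := ∑ d ∈ Nat.divisors n, d

/-- The weight 2 Eisenstein series `E₂`. -/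
def E2 (τ : ℂ) : ℂ := 1 - 24 * ∑' n : ℕ, (sigma1 (n+1) : ℂ) * e ((n + 1 : ℂ) * τ)

/-- `ϑ̃_{N,h}`. -/
def tvtheta (N : ℕ) (h : ℝ) (τ : ℂ) : ℂ :=
  (if ∃ m : ℤ, h = (m : ℝ) + 1/2 then
      e ((h : ℂ) / 2) * E2 τ / (12 * (N : ℂ) * Complex.I * eta3 τ) else 0)
  + ∑' n : ℤ, gfun τ ((N : ℝ) * n + h)

/-- The Schwartz function `φ_τ(x,y) = √(2v)·x·e(x²τ/2 - y²τ̄/2)`. -/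
def Phi (τ : ℂ) (x y : ℝ) : ℂ :=
  (Real.sqrt (2 * τ.im) : ℂ) * (x : ℂ) *
    e ((x : ℂ)^2 * τ / 2 - (y : ℂ)^2 * (starRingEnd ℂ) τ / 2)

/-- The signature (1,1) bilinear form `B((a₁,a₂),(b₁,b₂)) = a₁b₂ + a₂b₁`. -/
def Bform (a b : ℝ × ℝ) : ℝ := a.1 * b.2 + a.2 * b.1

/-- `Z⁺_t = (t/√2, t⁻¹/√2)`. -/
def Zp (t : ℝ) : ℝ × ℝ := (t / Real.sqrt 2, t⁻¹ / Real.sqrt 2)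

/-- `Z⁻_t = (t/√2, -t⁻¹/√2)`. -/
def Zm (t : ℝ) : ℝ × ℝ := (t / Real.sqrt 2, -t⁻¹ / Real.sqrt 2)

end

theorem aux_e_add (a b : ℂ) : e (a + b) = e a * e b := by
  unfold e; rw [mul_add, Complex.exp_add]

theorem aux_e_int (n : ℤ) : e n = 1 := by
  unfold e
  rw [← Complex.exp_int_mul_two_pi_mul_I n]; congr 1; ring

theorem aux_e_shift (a b : ℂ) (n : ℤ) (h : a = b + n) : e a = e b := by
  rw [h, aux_e_add, aux_e_int, mul_one]

theorem aux_e_ne (a : ℂ) : e a ≠ 0 := Complex.exp_ne_zero _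

theorem aux_half (m : ℤ) (τ : ℂ) :
    e (((m : ℂ) + 1/2)^2 / 2 * (τ + 1) + ((m : ℂ) + 1/2) / 2) =
      e (1/8) * e (((m : ℂ) + 1/2)^2 / 2 * τ + ((m : ℂ) + 1/2) / 2) := by
  obtain ⟨c, hc⟩ := Int.even_mul_succ_self m
  have hc' : (m : ℂ) * (m + 1) = c + c := by exact_mod_cast hc
  rw [← aux_e_add]
  apply aux_e_shift _ _ c
  linear_combination hc' / 2

theorem aux_eta3 (τ : ℂ) : eta3 (τ + 1) = e (1/8) * eta3 τ := by
  unfold eta3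
  simp_rw [aux_half]
  simp_rw [mul_left_comm _ (e (1/8)) _]
  rw [tsum_mul_left]
  ring

theorem aux_E2 (τ : ℂ) : E2 (τ + 1) = E2 τ := by
  unfold E2
  congr 3
  funext n
  congr 1
  apply aux_e_shift _ _ (n + 1)
  push_cast; ring

theorem aux_gplus (τ : ℂ) (x : ℝ) (c : ℂ)
    (hc : e (-(x : ℂ)^2 * (τ + 1) / 2) = c * e (-(x : ℂ)^2 * τ / 2)) :
    gplus (τ + 1) x = c * gplus τ x := by
  unfold gplus
  simp_rw [aux_half]
  have : ∀ m : ℤ, (if |x| < (m : ℝ) + 1/2 then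
      (((m : ℝ) + 1/2 - |x| : ℝ) : ℂ) *
        (e (1/8) * e (((m : ℂ) + 1/2)^2 / 2 * τ + ((m : ℂ) + 1/2) / 2)) else 0) =
      e (1/8) * (if |x| < (m : ℝ) + 1/2 then
      (((m : ℝ) + 1/2 - |x| : ℝ) : ℂ) *
        e (((m : ℂ) + 1/2)^2 / 2 * τ + ((m : ℂ) + 1/2) / 2) else 0) := by
    intro m
    split_ifs
    · ring
    · ring
  simp_rw [this]
  rw [tsum_mul_left, hc, aux_eta3]
  generalize (∑' m : ℤ, _ : ℂ) = S
  have h8 := aux_e_ne (1/8)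
  have : (Real.sign x : ℂ) / (Complex.I * (e (1/8) * eta3 τ)) =
      (Real.sign x : ℂ) / (Complex.I * eta3 τ) / e (1/8) := by
    rw [div_div]; congr 1; ring
  rw [this]
  field_simp

theorem aux_gfun (τ : ℂ) (x : ℝ) (c : ℂ)
    (hc : e (-(x : ℂ)^2 * (τ + 1) / 2) = c * e (-(x : ℂ)^2 * τ / 2)) :
    gfun (τ + 1) x = c * gfun τ x := by
  unfold gfun
  rw [aux_gplus τ x c hc]
  unfold gstar
  rw [hc]
  have : (τ + 1).im = τ.im := by simp
  rw [this]
  ring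

/-- `ϑ̃_{N,h}(τ+1) = e(-h²/2)·ϑ̃_{N,h}(τ)`. -/
theorem tvtheta_translation (N : ℕ) (hN : 0 < N) (hNe : Even N) (h : ℝ)
    (hh : ∃ k : ℤ, h = (k : ℝ) / N) (τ : ℂ) (hτ : 0 < τ.im) :
    tvtheta N h (τ + 1) = e (-(h : ℂ)^2 / 2) * tvtheta N h τ := by
  obtain ⟨k, hk⟩ := hh
  obtain ⟨M, hM⟩ := hNe
  have hN0 : (N : ℝ) ≠ 0 := by positivity
  have hk1 : (N : ℝ) * h = k := by rw [hk]; field_simp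
  have hk2 : (N : ℂ) * (h : ℂ) = k := by exact_mod_cast hk1
  have hM2 : (N : ℂ) = M + M := by exact_mod_cast hM
  have hg : ∀ n : ℤ, gfun (τ + 1) ((N : ℝ) * n + h) =
      e (-(h : ℂ)^2 / 2) * gfun τ ((N : ℝ) * n + h) := by
    intro n
    apply aux_gfun
    rw [← aux_e_add]
    apply aux_e_shift _ _ (-(N * M * n ^ 2) - n * k)
    push_cast
    linear_combination (-(n : ℂ)) * hk2 - (N : ℂ) * n ^ 2 / 2 * hM2
  unfold tvtheta
  simp_rw [hg]
  rw [tsum_mul_left, mul_add]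
  congr 1
  split_ifs with hm
  · obtain ⟨m, hm⟩ := hm
    have he : e (-(h : ℂ)^2 / 2) * e (1/8) = 1 := by
      obtain ⟨c, hc⟩ := Int.even_mul_succ_self m
      have hc' : (m : ℂ) * (m + 1) = c + c := by exact_mod_cast hc
      rw [← aux_e_add]
      refine Eq.trans ?_ (aux_e_int (-c))
      congr 1
      rw [hm]; push_cast
      linear_combination - hc' / 2
    rw [aux_E2, aux_eta3, eq_inv_of_mul_eq_one_left he]
    simp only [div_eq_mul_inv, mul_inv]
    ring
  · simp
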